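/- Let A be an invertible d×d real matrix admitting a proximal decomposition A = L₁·p₁ + … + L_d·p_d, and let B be any invertible d×d real matrix. Then the sequence λ₁(Aⁿ·B)/λ₁(Aⁿ) converges to |tr(p₁·B)| as n → ∞. -/

import Mathlib

open scoped BigOperators

/-- The spectral radius of a real `d × d` matrix: the maximum of the absolute values of
its complex eigenvalues, i.e. `λ₁(C)`. -/
noncomputable def specRad {d : ℕ} (C : Matrix (Fin d) (Fin d) ℝ) : ℝ :=
  (spectralRadius ℂ (C.map (Complex.ofReal))).toReal

/-- `λ_d(C) = λ₁(C⁻¹)⁻¹`, the smallest absolute value of a complex eigenvalue of an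
invertible matrix `C`. -/
noncomputable def lamLast {d : ℕ} (C : Matrix (Fin d) (Fin d) ℝ) : ℝ :=
  (specRad C⁻¹)⁻¹

/-- A proximal decomposition `A = L₁ p₁ + ⋯ + L_d p_d` of a `d × d` real matrix:
`|L₁| > |L₂| > ⋯ > |L_d| > 0` and the `pᵢ` are rank-one projections with
`pᵢ pⱼ = 0` for `i ≠ j`, `pᵢ² = pᵢ` and `p₁ + ⋯ + p_d = 1`. -/
structure ProximalDecomp {d : ℕ} (A : Matrix (Fin d) (Fin d) ℝ) where
  L : Fin d → ℝ
  p : Fin d → Matrix (Fin d) (Fin d) ℝ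
  strictAnti : StrictAnti fun i => |L i|
  abs_pos : ∀ i, 0 < |L i|
  rank_one : ∀ i, (p i).rank = 1
  mul_eq_zero : ∀ i j, i ≠ j → p i * p j = 0
  idem : ∀ i, p i * p i = p i
  sum_eq_one : ∑ i, p i = 1
  decomp : A = ∑ i, L i • p i

open Filter Topology Polynomial
open scoped Matrix.Norms.Operator Pointwise

namespace Matrix

variable {n : Type*} [Fintype n] [DecidableEq n]

/-- An eigenvalue of maximal modulus exists. -/
theorem exists_mem_spectrum_norm_eq [Nonempty n] (M : Matrix n n ℂ) :
    ∃ z ∈ spectrum ℂ M, ‖z‖ = (spectralRadius ℂ M).toReal := by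
  obtain ⟨z, hz, h⟩ := spectrum.exists_nnnorm_eq_spectralRadius M
  exact ⟨z, hz, by simp [← h]⟩

theorem norm_le_toReal_spectralRadius [Nonempty n] {M : Matrix n n ℂ} {z : ℂ}
    (hz : z ∈ spectrum ℂ M) : ‖z‖ ≤ (spectralRadius ℂ M).toReal := by
  obtain ⟨w, -, h⟩ := spectrum.exists_nnnorm_eq_spectralRadius M
  have hle : (‖z‖₊ : ENNReal) ≤ spectralRadius ℂ M :=
    le_iSup₂ (f := fun k (_ : k ∈ spectrum ℂ M) => (‖k‖₊ : ENNReal)) z hz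
  rw [← h] at hle ⊢
  exact mod_cast hle

/-- If every eigenvalue of `M` is at distance at least `ε` from `t`, then the characteristic
polynomial of `M` at `t` has modulus at least `ε ^ card n`. -/
theorem pow_card_le_norm_eval_charpoly (M : Matrix n n ℂ) (t : ℂ) {ε : ℝ} (hε : 0 ≤ ε)
    (h : ∀ z ∈ spectrum ℂ M, ε ≤ ‖t - z‖) :
    ε ^ Fintype.card n ≤ ‖M.charpoly.eval t‖ := by
  have hs : M.charpoly.Splits := IsAlgClosed.splits _
  rw [hs.eval_eq_prod_roots_of_monic M.charpoly_monic, ← M.charpoly_natDegree_eq_dim,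
    ← splits_iff_card_roots.mp hs, ← normHom_apply, map_multiset_prod, Multiset.map_map]
  calc ε ^ M.charpoly.roots.card = (M.charpoly.roots.map fun _ => ε).prod := by simp
    _ ≤ _ := Multiset.prod_map_le_prod_map₀ _ _ (fun _ _ => hε) fun z hz =>
      h z (mem_spectrum_of_isRoot_charpoly (isRoot_of_mem_roots hz))

theorem continuous_toReal_spectralRadius [Nonempty n] :
    Continuous fun M : Matrix n n ℂ => (spectralRadius ℂ M).toReal := by
  refine continuous_iff_continuousAt.mpr fun M => Metric.tendsto_nhds.mpr fun ε hε => ?_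
  obtain ⟨t, ht, htM⟩ := exists_mem_spectrum_norm_eq M
  have hupper : ∀ᶠ N in 𝓝 M,
      (spectralRadius ℂ N).toReal < (spectralRadius ℂ M).toReal + ε := by
    have hball : Metric.ball (0 : ℂ) ((spectralRadius ℂ M).toReal + ε) ∈
        𝓝ˢ (spectrum ℂ M) := by
      refine Metric.isOpen_ball.mem_nhdsSet.mpr fun z hz => ?_
      have := norm_le_toReal_spectralRadius hz
      rw [mem_ball_zero_iff]
      linarith
    filter_upwards [(upperHemicontinuous_spectrum ℂ (Matrix n n ℂ)).upperHemicontinuousAt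
      M _ hball] with N hN
    obtain ⟨s, hs, hsN⟩ := exists_mem_spectrum_norm_eq N
    rw [← hsN]
    exact mem_ball_zero_iff.mp (subset_of_mem_nhdsSet hN hs)
  have hlower : ∀ᶠ N in 𝓝 M,
      (spectralRadius ℂ M).toReal - ε < (spectralRadius ℂ N).toReal := by
    have hcont : Continuous fun N : Matrix n n ℂ => ‖N.charpoly.eval t‖ := by
      simp only [eval_charpoly]
      fun_prop
    have hroot : ‖M.charpoly.eval t‖ = 0 := by
      simpa [mem_spectrum_iff_isRoot_charpoly, IsRoot] using ht
    filter_upwards [hcont.continuousAt.eventually_lt_const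
      (hroot.trans_lt (pow_pos hε (Fintype.card n)))] with N hN
    by_contra! hle
    refine hN.not_ge (pow_card_le_norm_eval_charpoly N t hε.le fun z hz => ?_)
    have hz' := norm_le_toReal_spectralRadius hz
    have := norm_sub_norm_le t z
    linarith
  filter_upwards [hupper, hlower] with N h₁ h₂
  rw [Real.dist_eq, abs_lt]
  constructor <;> linarith

theorem toReal_spectralRadius_smul [Nonempty n] (c : ℂ) (M : Matrix n n ℂ) :
    (spectralRadius ℂ (c • M)).toReal = ‖c‖ * (spectralRadius ℂ M).toReal := by
  have hspec : spectrum ℂ (c • M) = c • spectrum ℂ M :=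
    spectrum.smul_eq_smul c M (spectrum.nonempty M)
  apply le_antisymm
  · obtain ⟨z, hz, h⟩ := exists_mem_spectrum_norm_eq (c • M)
    rw [hspec] at hz
    obtain ⟨w, hw, rfl⟩ := hz
    rw [← h]
    simpa using mul_le_mul_of_nonneg_left (norm_le_toReal_spectralRadius hw) (norm_nonneg c)
  · obtain ⟨z, hz, h⟩ := exists_mem_spectrum_norm_eq M
    rw [← h, ← norm_mul]
    exact norm_le_toReal_spectralRadius (hspec ▸ Set.smul_mem_smul_set hz)

theorem toReal_spectralRadius_vecMulVec [Nonempty n] (u v : n → ℂ) :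
    (spectralRadius ℂ (vecMulVec u v)).toReal = ‖u ⬝ᵥ v‖ := by
  have hmem : ∀ z, z ∈ spectrum ℂ (vecMulVec u v) ↔
      z ^ (Fintype.card n - 1) * (z - u ⬝ᵥ v) = 0 := fun z => by
    have hpow : z ^ Fintype.card n = z ^ (Fintype.card n - 1) * z := by
      rw [← pow_succ, Nat.sub_add_cancel Fintype.card_pos]
    simp only [mem_spectrum_iff_isRoot_charpoly, charpoly_vecMulVec, IsRoot, eval_sub, eval_smul,
      eval_pow, eval_X, smul_eq_mul, hpow]
    rw [mul_sub, mul_comm (u ⬝ᵥ v)]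
  apply le_antisymm
  · obtain ⟨z, hz, h⟩ := exists_mem_spectrum_norm_eq (vecMulVec u v)
    rw [← h]
    rcases mul_eq_zero.mp ((hmem z).mp hz) with h0 | h0
    · simp [eq_zero_of_pow_eq_zero h0]
    · rw [sub_eq_zero.mp h0]
  · exact norm_le_toReal_spectralRadius ((hmem _).mpr (by simp))

/-- A matrix of rank one is an outer product. -/
theorem exists_eq_vecMulVec_of_rank_eq_one {K : Type*} [Field K] {M : Matrix n n K}
    (h : M.rank = 1) : ∃ u v : n → K, M = vecMulVec u v := by
  obtain ⟨u, -, hu⟩ := finrank_eq_one_iff'.mp h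
  choose v hv using fun j => hu ⟨M.mulVecLin (Pi.single j 1), LinearMap.mem_range_self _ _⟩
  refine ⟨u, v, ?_⟩
  ext i j
  have := congrFun (congrArg Subtype.val (hv j)) i
  simpa [vecMulVec_apply, mul_comm] using this.symm

end Matrix

section specRad

open Matrix

variable {d : ℕ}

theorem continuous_specRad [NeZero d] : Continuous (specRad (d := d)) :=
  continuous_toReal_spectralRadius.comp (continuous_id.matrix_map Complex.continuous_ofReal)

theorem specRad_smul [NeZero d] (c : ℝ) (C : Matrix (Fin d) (Fin d) ℝ) :
    specRad (c • C) = |c| * specRad C := by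
  have : (c • C).map Complex.ofReal = (c : ℂ) • C.map Complex.ofReal := by
    ext i j
    simp
  rw [specRad, this, toReal_spectralRadius_smul, specRad, Complex.norm_real, Real.norm_eq_abs]

theorem specRad_vecMulVec [NeZero d] (u v : Fin d → ℝ) :
    specRad (vecMulVec u v) = |(vecMulVec u v).trace| := by
  have : (vecMulVec u v).map Complex.ofReal =
      vecMulVec (fun i => (u i : ℂ)) (fun i => (v i : ℂ)) := by
    ext i j
    simp [vecMulVec_apply]
  rw [specRad, this, toReal_spectralRadius_vecMulVec, trace_vecMulVec, ← Real.norm_eq_abs,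
    ← Complex.norm_real]
  simp [dotProduct]

end specRad

namespace ProximalDecomp

variable {d : ℕ} {A : Matrix (Fin d) (Fin d) ℝ} (DA : ProximalDecomp A)

theorem pow_eq (k : ℕ) : A ^ k = ∑ i, DA.L i ^ k • DA.p i := by
  induction k with
  | zero => simp [DA.sum_eq_one]
  | succ k ih =>
    rw [pow_succ, ih, (congrArg _ DA.decomp : _ * A = _), Finset.sum_mul_sum]
    refine Finset.sum_congr rfl fun i _ => ?_
    rw [Finset.sum_eq_single i]
    · simp [DA.idem, smul_smul, pow_succ, mul_comm]
    · intro j _ hj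
      simp [DA.mul_eq_zero i j hj.symm]
    · simp

theorem tendsto_smul_pow (hd : 0 < d) :
    Tendsto (fun k : ℕ => (DA.L ⟨0, hd⟩ ^ k)⁻¹ • A ^ k) atTop (𝓝 (DA.p ⟨0, hd⟩)) := by
  have hL : DA.L ⟨0, hd⟩ ≠ 0 := _root_.abs_pos.mp (DA.abs_pos _)
  have hterm : ∀ i, Tendsto (fun k : ℕ => (DA.L i / DA.L ⟨0, hd⟩) ^ k • DA.p i) atTop
      (𝓝 (if i = ⟨0, hd⟩ then DA.p i else 0)) := fun i => by
    split_ifs with hi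
    · simp [hi, hL]
    · rw [← zero_smul ℝ (DA.p i)]
      refine (tendsto_pow_atTop_nhds_zero_of_abs_lt_one ?_).smul_const _
      rw [abs_div, div_lt_one (DA.abs_pos _)]
      exact DA.strictAnti (lt_of_le_of_ne (Nat.zero_le _) (Ne.symm hi))
  have hsum := tendsto_finsetSum Finset.univ fun i _ => hterm i
  rw [Finset.sum_ite_eq' Finset.univ, if_pos (Finset.mem_univ _)] at hsum
  refine hsum.congr fun k => ?_
  rw [DA.pow_eq, Finset.smul_sum]
  refine Finset.sum_congr rfl fun i _ => ?_
  rw [smul_smul, div_pow, div_eq_inv_mul]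

theorem trace_p (i : Fin d) : (DA.p i).trace = 1 := by
  obtain ⟨u, v, h⟩ := Matrix.exists_eq_vecMulVec_of_rank_eq_one (DA.rank_one i)
  have hp : DA.p i ≠ 0 := fun h0 => by simpa [h0] using DA.rank_one i
  have hidem : (DA.p i).trace • DA.p i = DA.p i := by
    conv_rhs => rw [← DA.idem i]
    rw [h, Matrix.trace_vecMulVec, Matrix.vecMulVec_mul_vecMulVec, Matrix.vecMulVec_smul,
      dotProduct_comm]
  refine smul_left_injective ℝ hp ?_
  simpa using hidem

end ProximalDecomp

open Filter in
/-- If `A` is an invertible `d × d` real matrix with a proximal decomposition and `B` is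
any invertible `d × d` real matrix, then `λ₁(Aⁿ B) / λ₁(Aⁿ) → |tr (p₁ B)|` as `n → ∞`. -/
theorem specRad_mul_tendsto (d : ℕ) (hd : 0 < d)
    (A B : Matrix (Fin d) (Fin d) ℝ) (hA : IsUnit A) (hB : IsUnit B)
    (DA : ProximalDecomp A) :
    Tendsto (fun n : ℕ => specRad (A ^ n * B) / specRad (A ^ n)) atTop
      (nhds |(DA.p ⟨0, hd⟩ * B).trace|) := by
  have : NeZero d := ⟨hd.ne'⟩
  obtain ⟨u, v, huv⟩ := Matrix.exists_eq_vecMulVec_of_rank_eq_one (DA.rank_one ⟨0, hd⟩)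
  have hlim := DA.tendsto_smul_pow hd
  have hnum := (continuous_specRad.tendsto _).comp (hlim.mul_const B)
  have hden := (continuous_specRad.tendsto _).comp hlim
  have hone : specRad (DA.p ⟨0, hd⟩) = 1 := by
    have htr := DA.trace_p ⟨0, hd⟩
    rw [huv] at htr ⊢
    rw [specRad_vecMulVec, htr, abs_one]
  have hval : specRad (DA.p ⟨0, hd⟩ * B) = |(DA.p ⟨0, hd⟩ * B).trace| := by
    rw [huv, Matrix.vecMulVec_mul, specRad_vecMulVec]
  rw [hone] at hden
  rw [hval] at hnum
  have hdiv := hnum.div hden one_ne_zero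
  rw [div_one] at hdiv
  refine hdiv.congr fun k => ?_
  have hL : |(DA.L ⟨0, hd⟩ ^ k)⁻¹| ≠ 0 :=
    abs_ne_zero.mpr (inv_ne_zero (pow_ne_zero _ (abs_pos.mp (DA.abs_pos _))))
  simp only [Pi.div_apply, Function.comp_apply, smul_mul_assoc, specRad_smul]
  rw [mul_div_mul_left _ _ hL]
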